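/- Let m ≥ 1, r ≥ 0, let (Q_0,P_0), …, (Q_r,P_r) be r+1 pairs of m×m matrices of independent commuting indeterminates, and set A_k := Σ_{i=0}^{r−k} Q_i P_{i+k} for 0 ≤ k ≤ r. For 1 ≤ s ≤ 2r+1 define the spectral invariants S_s := Σ_{0 ≤ j,l ≤ r, j+l = s−1} Tr(A_j A_l) (so that Tr A(z)^2 = Σ_s S_s z^{−s−1} for A(z) = Σ_k A_k z^{−k−1}). Then with respect to the canonical Poisson bracket the spectral invariants are in involution: {S_s, S_{s'}} = 0 for all 1 ≤ s, s' ≤ 2r+1. -/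

import Mathlib

/-!
Involutivity of the quadratic spectral invariants `S_s = Σ_{j+l = s−1} Tr(A_jA_l)` of a
single Takiff co-adjoint orbit, in lifted Darboux coordinates.
-/

open MvPolynomial

noncomputable section

/-- Index type for the entries of `N` pairs of `m × m` matrices of indeterminates. -/
abbrev Idx (N m : ℕ) := Fin N × Bool × Fin m × Fin m

/-- The matrix `Q_α` of indeterminates. -/
def Qm (N m : ℕ) (α : Fin N) : Matrix (Fin m) (Fin m) (MvPolynomial (Idx N m) ℂ) :=
  Matrix.of fun i j => X (α, false, i, j)

/-- The matrix `P_α` of indeterminates. -/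
def Pm (N m : ℕ) (α : Fin N) : Matrix (Fin m) (Fin m) (MvPolynomial (Idx N m) ℂ) :=
  Matrix.of fun i j => X (α, true, i, j)

/-- The canonical Poisson bracket. -/
def pois {N m : ℕ} (f g : MvPolynomial (Idx N m) ℂ) : MvPolynomial (Idx N m) ℂ :=
  ∑ α : Fin N, ∑ i : Fin m, ∑ j : Fin m,
    (pderiv (α, true, i, j) f * pderiv (α, false, j, i) g
      - pderiv (α, true, i, j) g * pderiv (α, false, j, i) f)

/-- The Takiff parametrisation `A_k := Σ_{i=0}^{r−k} Q_i P_{i+k}` (given `r+1` pairs). -/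
def Amat (m r : ℕ) (k : ℕ) : Matrix (Fin m) (Fin m) (MvPolynomial (Idx (r+1) m) ℂ) :=
  ∑ i : Fin (r+1), ∑ j : Fin (r+1),
    if (j : ℕ) = (i : ℕ) + k then Qm (r+1) m i * Pm (r+1) m j else 0

/-- The spectral invariant `S_s := Σ_{0 ≤ j,l ≤ r, j+l = s−1} Tr(A_jA_l)`
(stated via `j + l + 1 = s` to avoid natural subtraction). -/
def Sinv (m r : ℕ) (s : ℕ) : MvPolynomial (Idx (r+1) m) ℂ :=
  ∑ j ∈ Finset.range (r+1), ∑ l ∈ Finset.range (r+1),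
    if j + l + 1 = s then (Amat m r j * Amat m r l).trace else 0

end


theorem tk_swap {R : Type*} [AddCommMonoid R] (f : ℕ → ℕ → R) (n : ℕ) :
    ∑ p ∈ Finset.HasAntidiagonal.antidiagonal n, f p.2 p.1
      = ∑ p ∈ Finset.HasAntidiagonal.antidiagonal n, f p.1 p.2 :=
  Finset.Nat.sum_antidiagonal_swap (f := fun p : ℕ × ℕ => f p.1 p.2)

/-- Sum of an antisymmetric function over an antidiagonal vanishes. -/
theorem tk_antidiag_zero {R : Type*} [CommRing R] [CharZero R] [NoZeroDivisors R]
    (f : ℕ → ℕ → R) (h : ∀ a b, f a b = - f b a) (n : ℕ) :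
    ∑ p ∈ Finset.HasAntidiagonal.antidiagonal n, f p.1 p.2 = 0 := by
  have h1 : ∑ p ∈ Finset.HasAntidiagonal.antidiagonal n, f p.1 p.2
      = ∑ p ∈ Finset.HasAntidiagonal.antidiagonal n, f p.2 p.1 :=
    (Finset.Nat.sum_antidiagonal_swap (f := fun p : ℕ × ℕ => f p.1 p.2)).symm
  have h2 : ∑ p ∈ Finset.HasAntidiagonal.antidiagonal n, f p.1 p.2
      = - ∑ p ∈ Finset.HasAntidiagonal.antidiagonal n, f p.2 p.1 := by
    rw [← Finset.sum_neg_distrib]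
    exact Finset.sum_congr rfl fun p _ => h _ _
  rw [← h1] at h2
  exact self_eq_neg.mp h2

theorem tk_comb {R : Type*} [CommRing R] [CharZero R] [NoZeroDivisors R]
    (F : ℕ → ℕ → ℕ → R) (h12 : ∀ a b c, F a b c = - F b a c)
    (h13 : ∀ a b c, F a b c = - F c b a) (n : ℕ) : ∀ n' : ℕ,
    ∑ p ∈ Finset.HasAntidiagonal.antidiagonal n, ∑ q ∈ Finset.HasAntidiagonal.antidiagonal n',
      F (p.1 + q.1) q.2 p.2 = 0 := by
  induction n with
  | zero =>
    intro n'
    simpa using tk_antidiag_zero (fun a b => F a b 0) (fun a b => h12 a b 0) n'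
  | succ n ih =>
    intro n'
    have := ih (n' + 1)
    simp only [Finset.Nat.sum_antidiagonal_succ, Finset.sum_add_distrib] at this ⊢
    have e1 := tk_antidiag_zero (fun a b => F a b (n+1)) (fun a b => h12 a b _) n'
    have e2 := tk_antidiag_zero (fun a b => F a (n'+1) b) (fun a b => h13 a _ b) n
    simp only [add_zero, zero_add] at this ⊢
    rw [e2, zero_add] at this
    rw [e1, zero_add, ← this]
    refine Finset.sum_congr rfl fun p _ => Finset.sum_congr rfl fun q _ => ?_
    congr 1
    omega

/-- The bracket as a derivation in its second argument. -/
noncomputable def poisD {N m : ℕ} (f : MvPolynomial (Idx N m) ℂ) :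
    Derivation ℂ (MvPolynomial (Idx N m) ℂ) (MvPolynomial (Idx N m) ℂ) :=
  ∑ α : Fin N, ∑ i : Fin m, ∑ j : Fin m,
    (pderiv (α, true, i, j) f • pderiv (α, false, j, i)
      - pderiv (α, false, j, i) f • pderiv (α, true, i, j))

theorem poisD_apply {N m : ℕ} (f g : MvPolynomial (Idx N m) ℂ) : poisD f g = pois f g := by
  have key : ∀ {ι : Type} (s : Finset ι)
      (D : ι → Derivation ℂ (MvPolynomial (Idx N m) ℂ) (MvPolynomial (Idx N m) ℂ)),
      (∑ i ∈ s, D i) g = ∑ i ∈ s, D i g := by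
    intro ι s D
    rw [← Derivation.coeFnAddMonoidHom_apply, map_sum, Finset.sum_apply]; rfl
  simp only [poisD, pois, key, Derivation.sub_apply, Derivation.smul_apply, smul_eq_mul]
  refine Finset.sum_congr rfl fun _ _ => Finset.sum_congr rfl fun _ _ =>
    Finset.sum_congr rfl fun _ _ => ?_
  ring

theorem pois_anti {N m : ℕ} (f g : MvPolynomial (Idx N m) ℂ) : pois f g = - pois g f := by
  simp only [pois, ← Finset.sum_neg_distrib, neg_sub]

theorem Amat_apply (m r k : ℕ) (a b : Fin m) : Amat m r k a b =
    ∑ i : Fin (r+1), ∑ j : Fin (r+1), if (j : ℕ) = (i : ℕ) + k then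
      ∑ x, X (i, false, a, x) * X (j, true, x, b) else 0 := by
  simp only [Amat, Matrix.sum_apply]
  refine Finset.sum_congr rfl fun i _ => Finset.sum_congr rfl fun j _ => ?_
  split_ifs <;> simp [Matrix.mul_apply, Qm, Pm]

theorem pderiv_true (m r k : ℕ) (a b i j : Fin m) (α : Fin (r+1)) :
    pderiv (α, true, i, j) (Amat m r k a b) =
      if j = b then ∑ i' : Fin (r+1), if (α : ℕ) = i' + k then X (i', false, a, i) else 0
      else 0 := by
  rw [Amat_apply]
  simp only [map_sum, apply_ite (pderiv (α, true, i, j)), map_zero, Derivation.leibniz, pderiv_X,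
    Pi.single_apply, smul_eq_mul, Prod.mk.injEq]
  simp only [Bool.false_eq_true, Bool.true_eq_false, reduceCtorEq, false_and, and_false, if_false, true_and, mul_zero, add_zero, mul_ite,
    mul_one, ite_and]
  by_cases hb : j = b
  · subst hb
    simp
    refine Finset.sum_congr rfl fun i' _ => ?_
    rw [Finset.sum_eq_single α]
    · simp
    · intro c _ hc; simp [hc]
    · simp
  · simp [hb, Ne.symm hb]

theorem pderiv_false (m r k : ℕ) (a b i j : Fin m) (α : Fin (r+1)) :
    pderiv (α, false, i, j) (Amat m r k a b) =
      if i = a then ∑ j' : Fin (r+1), if (j' : ℕ) = α + k then X (j', true, j, b) else 0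
      else 0 := by
  rw [Amat_apply]
  simp only [map_sum, apply_ite (pderiv (α, false, i, j)), map_zero, Derivation.leibniz, pderiv_X,
    Pi.single_apply, smul_eq_mul, Prod.mk.injEq]
  simp only [Bool.false_eq_true, Bool.true_eq_false, reduceCtorEq, false_and, and_false, if_false, true_and, mul_zero, zero_add, mul_ite,
    mul_one, ite_and]
  by_cases hb : i = a
  · subst hb
    rw [Finset.sum_eq_single α]
    · simp
    · intro c _ hc; simp [hc]
    · simp
  · simp [hb, Ne.symm hb]

theorem tk_BC (m r k l : ℕ) (a d : Fin m) :
    ∑ α : Fin (r+1), ∑ x : Fin m,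
      (∑ i' : Fin (r+1), if (α : ℕ) = i' + k then
        (X (i', false, a, x) : MvPolynomial (Idx (r+1) m) ℂ) else 0) *
      (∑ j' : Fin (r+1), if (j' : ℕ) = α + l then X (j', true, x, d) else 0)
      = Amat m r (k + l) a d := by
  rw [Amat_apply]
  simp only [Finset.sum_mul_sum]
  have : ∀ α : Fin (r+1), (∑ x : Fin m, ∑ i' : Fin (r+1), ∑ j' : Fin (r+1),
      (if (α : ℕ) = i' + k then
        (X (i', false, a, x) : MvPolynomial (Idx (r+1) m) ℂ) else 0) *
      (if (j' : ℕ) = α + l then X (j', true, x, d) else 0)) =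
      ∑ i' : Fin (r+1), ∑ j' : Fin (r+1), ∑ x : Fin m, (if (α : ℕ) = i' + k then
        (X (i', false, a, x) : MvPolynomial (Idx (r+1) m) ℂ) else 0) *
      (if (j' : ℕ) = α + l then X (j', true, x, d) else 0) := by
    intro α
    rw [Finset.sum_comm]
    exact Finset.sum_congr rfl fun _ _ => Finset.sum_comm
  simp only [this]
  rw [Finset.sum_comm]
  refine Finset.sum_congr rfl fun i _ => ?_
  rw [Finset.sum_comm]
  refine Finset.sum_congr rfl fun j _ => ?_
  by_cases h : (j : ℕ) = i + (k + l)
  · have hlt : (i : ℕ) + k < r + 1 := by have := j.2; omega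
    rw [Finset.sum_eq_single ⟨i + k, hlt⟩]
    · have h' : (j : ℕ) = i + k + l := by omega
      simp [h, ← h']
    · intro c _ hc
      have : (c : ℕ) ≠ i + k := fun h => hc (Fin.ext h)
      simp [this]
    · simp
  · rw [if_neg h]
    refine Finset.sum_eq_zero fun c _ => Finset.sum_eq_zero fun x _ => ?_
    by_cases h1 : (c : ℕ) = i + k
    · have : ¬ (j : ℕ) = c + l := by omega
      simp [this]
    · simp [h1]

theorem pois_Amat (m r k l : ℕ) (a b c d : Fin m) :
    pois (Amat m r k a b) (Amat m r l c d) =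
      (if b = c then Amat m r (k + l) a d else 0)
        - (if d = a then Amat m r (k + l) c b else 0) := by
  simp only [pois, pderiv_true, pderiv_false, Finset.sum_sub_distrib]
  congr 1
  · rw [← tk_BC]
    by_cases h : b = c
    · subst h
      simp [-Finset.sum_ite_eq, ite_mul, mul_ite, Finset.sum_ite_irrel]
    · rw [if_neg h]
      refine Finset.sum_eq_zero fun α _ => Finset.sum_eq_zero fun x _ =>
        Finset.sum_eq_zero fun y _ => ?_
      by_cases h1 : y = b
      · subst h1; simp [h]
      · simp [h1]
  · rw [add_comm k l, ← tk_BC]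
    by_cases h : d = a
    · subst h
      simp [-Finset.sum_ite_eq, ite_mul, mul_ite, Finset.sum_ite_irrel]
    · rw [if_neg h]
      refine Finset.sum_eq_zero fun α _ => Finset.sum_eq_zero fun x _ =>
        Finset.sum_eq_zero fun y _ => ?_
      by_cases h1 : y = d
      · subst h1; simp [h]
      · simp [h1]

theorem Amat_zero (m r k : ℕ) (h : r < k) : Amat m r k = 0 := by
  refine Finset.sum_eq_zero fun i _ => Finset.sum_eq_zero fun j _ => ?_
  rw [if_neg]
  have := j.2
  omega

theorem Sinv_eq (m r n : ℕ) : Sinv m r (n + 1) =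
    ∑ p ∈ Finset.HasAntidiagonal.antidiagonal n, (Amat m r p.1 * Amat m r p.2).trace := by
  simp only [Sinv, Nat.add_right_cancel_iff]
  rw [← Finset.sum_product', ← Finset.sum_filter]
  refine Finset.sum_subset_zero_on_sdiff ?_ ?_ fun _ _ => rfl
  · intro p hp
    simp at hp ⊢
    exact hp.2
  · intro p hp
    simp at hp
    by_cases h : r < p.1
    · simp [Amat_zero m r p.1 h]
    · have : r < p.2 := by
        by_contra h2
        exact hp.2 (by omega) (by omega) hp.1
      simp [Amat_zero m r p.2 this]

/-- `{Tr(A_j A_l), g}`-type Leibniz rule. -/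
theorem pois_trace (m r j l : ℕ) (f : MvPolynomial (Idx (r+1) m) ℂ) :
    pois f (Amat m r j * Amat m r l).trace =
      ((Matrix.of fun a b => pois f (Amat m r j a b)) * Amat m r l).trace
      + ((Matrix.of fun a b => pois f (Amat m r l a b)) * Amat m r j).trace := by
  rw [Matrix.trace_mul_comm (Matrix.of fun a b => pois f (Amat m r l a b))]
  simp only [← poisD_apply, Matrix.trace, Matrix.diag, Matrix.mul_apply, map_sum,
    Derivation.leibniz, smul_eq_mul, Matrix.of_apply, Finset.sum_add_distrib]
  refine (add_comm _ _).trans (congrArg (· + _) ?_)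
  exact Finset.sum_congr rfl fun _ _ => Finset.sum_congr rfl fun _ _ => mul_comm _ _

theorem pois_Sinv (m r n : ℕ) (f : MvPolynomial (Idx (r+1) m) ℂ) :
    pois f (Sinv m r (n + 1)) = 2 * ∑ p ∈ Finset.HasAntidiagonal.antidiagonal n,
      ((Matrix.of fun a b => pois f (Amat m r p.1 a b)) * Amat m r p.2).trace := by
  rw [Sinv_eq, ← poisD_apply, map_sum]
  simp only [poisD_apply, pois_trace, Finset.sum_add_distrib]
  refine Eq.trans (congrArg (_ + ·) ?_) (two_mul _).symm
  exact tk_swap (fun x y =>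
    ((Matrix.of fun a b => pois f (Amat m r x a b)) * Amat m r y).trace) n

theorem pois_Amat_trace (m r k j l : ℕ) (a b : Fin m) :
    ((Matrix.of fun c d => pois (Amat m r k a b) (Amat m r j c d)) * Amat m r l).trace
      = (Amat m r (k + j) * Amat m r l - Amat m r l * Amat m r (k + j)) a b := by
  simp only [pois_Amat, Matrix.trace, Matrix.diag, Matrix.mul_apply, Matrix.of_apply,
    Matrix.sub_apply, sub_mul, Finset.sum_sub_distrib, ite_mul, zero_mul]
  congr 1
  · rw [Finset.sum_comm]
    simp
  · simp [mul_comm]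

theorem pois_Sinv_Sinv (m r n n' : ℕ) :
    pois (Sinv m r (n' + 1)) (Sinv m r (n + 1)) = 0 := by
  rw [pois_Sinv]
  have h : ∀ p : ℕ × ℕ,
      (Matrix.of fun a b => pois (Sinv m r (n' + 1)) (Amat m r p.1 a b)) =
      - ((2 : MvPolynomial (Idx (r+1) m) ℂ) • ∑ q ∈ Finset.HasAntidiagonal.antidiagonal n',
        (Amat m r (p.1 + q.1) * Amat m r q.2 - Amat m r q.2 * Amat m r (p.1 + q.1))) := by
    intro p
    ext1 a b
    rw [Matrix.of_apply, pois_anti, pois_Sinv]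
    simp only [pois_Amat_trace, Matrix.neg_apply, Matrix.smul_apply, Matrix.sum_apply, smul_eq_mul]
  have c := tk_comb (fun x y z =>
    ((Amat m r x * Amat m r y - Amat m r y * Amat m r x) * Amat m r z).trace)
    (fun x y z => by rw [← Matrix.trace_neg, ← neg_mul, neg_sub])
    (fun x y z => by
      simp only [sub_mul, Matrix.trace_sub]
      rw [Matrix.trace_mul_cycle (Amat m r y) (Amat m r z),
        Matrix.trace_mul_cycle (Amat m r y) (Amat m r x)]
      ring) n n'
  simp only [h, neg_mul, Matrix.smul_mul, Finset.sum_mul, Matrix.trace_neg, Matrix.trace_smul,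
    Matrix.trace_sum, Finset.sum_neg_distrib, ← Finset.smul_sum]
  rw [c]
  simp

/-- the spectral invariants are in involution with respect to the canonical
Poisson bracket: `{S_s, S_{s'}} = 0` for all `1 ≤ s, s' ≤ 2r+1`. -/
theorem statement15 (m r : ℕ) (hm : 1 ≤ m)
    (s s' : ℕ) (hs1 : 1 ≤ s) (hs2 : s ≤ 2 * r + 1) (hs'1 : 1 ≤ s') (hs'2 : s' ≤ 2 * r + 1) :
    pois (Sinv m r s) (Sinv m r s') = 0 := by
  obtain ⟨n, rfl⟩ := Nat.exists_eq_add_of_le' hs1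
  obtain ⟨n', rfl⟩ := Nat.exists_eq_add_of_le' hs'1
  exact pois_Sinv_Sinv m r n' n
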